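/- Let E be a Banach space and let β denote the De Blasi measure of weak noncompactness. For any bounded nonempty subset A of E, β(convexHull(A)) = β(A). -/

import Mathlib

open Metric Set Pointwise

/-- Weakly compact subset of a normed space: compact in the weak topology. -/
def IsWeaklyCompact {E : Type*} [NormedAddCommGroup E] [NormedSpace ℝ E] (C : Set E) : Prop :=
  IsCompact (toWeakSpace ℝ E '' C)

/-- De Blasi measure of weak noncompactness. -/
noncomputable def deBlasi {E : Type*} [NormedAddCommGroup E] [NormedSpace ℝ E]
    (A : Set E) : ℝ :=
  sInf {t : ℝ | 0 < t ∧ ∃ C : Set E, IsWeaklyCompact C ∧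
    A ⊆ C + t • Metric.closedBall (0 : E) 1}


/-!
Replacing `C` by its closed convex hull turns `A ⊆ C + t • B` into `convexHull A ⊆ C' + t • B`, so
everything rests on the Krein–Šmulian theorem. The barycenters of the probability measures on a
weakly compact set `C` form a convex set containing `C`, weakly compact as a continuous image of
the compact space of probability measures, provided that they exist in the space and not only in
its bidual. If the functional `Φ f = ∫ f dμ` were at distance more than `δ > 0` from the space,
Helly's theorem would put `0` in the weak-* closure of `{f | ‖f‖ ≤ 1 ∧ δ < ‖Φ f‖}`. A sequence in
this set can be chosen that tends to `0` at every point of `C`: choose it to converge on finer and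
finer finite nets of `C`, then interchange limits by weak-* compactness of the dual ball. This
contradicts dominated convergence.
-/

open Filter Topology MeasureTheory NormedSpace unitInterval

theorem exists_finset_forall_exists_dist_lt {ι X Y : Type*} [TopologicalSpace X] [CompactSpace X]
    [PseudoMetricSpace Y] {e : ι → X → Y} (he : ∀ i, Continuous (e i)) (F : Finset ι) {ε : ℝ}
    (hε : 0 < ε) :
    ∃ D : Finset X, ∀ x, ∃ d ∈ D, ∀ i ∈ F, dist (e i x) (e i d) < ε := by
  obtain ⟨D, hD⟩ := CompactSpace.elim_nhds_subcover
    (fun d => {x | ∀ i ∈ F, dist (e i x) (e i d) < ε}) fun d =>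
      (Filter.eventually_all_finset F).2 fun i _ =>
        (he i).continuousAt.eventually (Metric.ball_mem_nhds _ hε)
  refine ⟨D, fun x => ?_⟩
  simpa using hD.ge (mem_univ x)

theorem exists_mem_forall_dist_lt_of_mem_closure {H X Y : Type*} [TopologicalSpace H]
    [PseudoMetricSpace Y] {e : H → X → Y} (he : ∀ x, Continuous fun h => e h x) {A : Set H}
    {h₀ : H} (hA : h₀ ∈ closure A) (D : Finset X) {ε : ℝ} (hε : 0 < ε) :
    ∃ h ∈ A, ∀ d ∈ D, dist (e h d) (e h₀ d) < ε := by
  refine ((mem_closure_iff_frequently.1 hA).and_eventually ?_).exists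
  exact (Filter.eventually_all_finset D).2 fun d _ =>
    (he d).continuousAt.eventually (Metric.ball_mem_nhds _ hε)

section DoubleLimit

variable {H X Y : Type*} [TopologicalSpace H] [TopologicalSpace X] [CompactSpace X]

theorem tendsto_of_tendsto_iterated_of_separatelyContinuous {α β : Type*}
    [TopologicalSpace Y] [T2Space Y] {e : H → X → Y} (he_left : ∀ x, Continuous fun h => e h x)
    (he_right : ∀ h, Continuous (e h)) {K : Set H} (hK : IsCompact K)
    {u : α → H} (hu : ∀ n, u n ∈ K) {d : β → X} {k : Filter α} {l : Filter β} [l.NeBot]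
    {a : β → Y} {b : Y} {c : α → Y} (ha : ∀ m, Tendsto (fun n => e (u n) (d m)) k (𝓝 (a m)))
    (hab : Tendsto a l (𝓝 b)) (hc : ∀ n, Tendsto (fun m => e (u n) (d m)) l (𝓝 (c n))) :
    Tendsto c k (𝓝 b) := by
  obtain ⟨y, -, hy⟩ := isCompact_univ.ultrafilter_le_nhds ((Ultrafilter.of l).map d) (by simp)
  have tendsto_apply (h : H) : Tendsto (fun m => e h (d m)) (Ultrafilter.of l) (𝓝 (e h y)) :=
    ((he_right h).tendsto y).comp hy
  have hcy (n : α) : e (u n) y = c n :=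
    tendsto_nhds_unique (tendsto_apply (u n)) ((hc n).mono_left (Ultrafilter.of_le l))
  refine (tendsto_iff_ultrafilter c k (𝓝 b)).2 fun V hV => ?_
  obtain ⟨g, -, hg⟩ := hK.ultrafilter_le_nhds (V.map u)
    (le_principal_iff.2 (mem_map.2 (univ_mem' hu)))
  have tendsto_eval (x : X) : Tendsto (fun n => e (u n) x) V (𝓝 (e g x)) :=
    ((he_left x).tendsto g).comp hg
  have hga (m : β) : e g (d m) = a m :=
    tendsto_nhds_unique (tendsto_eval (d m)) ((ha m).mono_left hV)
  have hgy : e g y = b :=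
    tendsto_nhds_unique (tendsto_apply g) ((hab.mono_left (Ultrafilter.of_le l)).congr
      fun m => (hga m).symm)
  simpa only [hcy, hgy] using tendsto_eval y

variable [PseudoMetricSpace Y]

theorem exists_seq_forall_exists_seq_tendsto_of_mem_closure {e : H → X → Y}
    (he_left : ∀ x, Continuous fun h => e h x) (he_right : ∀ h, Continuous (e h))
    {A : Set H} {h₀ : H} (hA : h₀ ∈ closure A) :
    ∃ u : ℕ → H, (∀ n, u n ∈ A) ∧ ∀ x, ∃ d : ℕ → X,
      (∀ m, Tendsto (fun n => e (u n) (d m)) atTop (𝓝 (e h₀ (d m)))) ∧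
      Tendsto (fun m => e h₀ (d m)) atTop (𝓝 (e h₀ x)) ∧
      ∀ n, Tendsto (fun m => e (u n) (d m)) atTop (𝓝 (e (u n) x)) := by
  classical
  have hε := tendsto_one_div_add_atTop_nhds_zero_nat (𝕜 := ℝ)
  choose net hnet using fun (F : Finset H) (n : ℕ) =>
    exists_finset_forall_exists_dist_lt he_right F (Nat.one_div_pos_of_nat (α := ℝ) (n := n))
  -- Ranging over all subsets of `F` makes `next F n` aware of the nets chosen at earlier stages.
  choose next hnextA hnext using fun (F : Finset H) (n : ℕ) =>
    exists_mem_forall_dist_lt_of_mem_closure he_left hA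
      ((F.powerset ×ˢ Finset.range (n + 1)).biUnion fun p => net p.1 p.2)
      (Nat.one_div_pos_of_nat (α := ℝ) (n := n))
  let F : ℕ → Finset H := Nat.rec {h₀} fun n F => insert (next F n) F
  have hF_mono : Monotone F := monotone_nat_of_le_succ fun n => Finset.subset_insert _ _
  have h₀_mem (m : ℕ) : h₀ ∈ F m := hF_mono m.zero_le (Finset.mem_singleton_self h₀)
  have next_mem {n m : ℕ} (hnm : n < m) : next (F n) n ∈ F m :=
    hF_mono hnm (Finset.mem_insert_self _ _)
  refine ⟨fun n => next (F n) n, fun n => hnextA _ _, fun x => ?_⟩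
  choose d hd_mem hd using fun m => hnet (F m) m x
  refine ⟨d, fun m => ?_, ?_, fun n => ?_⟩
  · refine tendsto_iff_dist_tendsto_zero.2 (squeeze_zero' (.of_forall fun _ => dist_nonneg) ?_ hε)
    filter_upwards [eventually_ge_atTop m] with n hmn
    refine (hnext (F n) n (d m) (Finset.mem_biUnion.2 ⟨(F m, m), ?_, hd_mem m⟩)).le
    exact Finset.mk_mem_product (Finset.mem_powerset.2 (hF_mono hmn))
      (Finset.mem_range_succ_iff.2 hmn)
  · refine tendsto_iff_dist_tendsto_zero.2 (squeeze_zero (fun _ => dist_nonneg) (fun m => ?_) hε)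
    rw [dist_comm]
    exact (hd m _ (h₀_mem m)).le
  · refine tendsto_iff_dist_tendsto_zero.2 (squeeze_zero' (.of_forall fun _ => dist_nonneg) ?_ hε)
    filter_upwards [eventually_gt_atTop n] with m hnm
    rw [dist_comm]
    exact (hd m _ (next_mem hnm)).le

end DoubleLimit

theorem exists_seq_tendsto_of_mem_closure_of_separatelyContinuous {H X Y : Type*}
    [TopologicalSpace H] [TopologicalSpace X] [CompactSpace X] [MetricSpace Y] {e : H → X → Y}
    (he_left : ∀ x, Continuous fun h => e h x) (he_right : ∀ h, Continuous (e h))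
    {K A : Set H} (hK : IsCompact K) (hAK : A ⊆ K) {h₀ : H} (hA : h₀ ∈ closure A) :
    ∃ u : ℕ → H, (∀ n, u n ∈ A) ∧ ∀ x, Tendsto (fun n => e (u n) x) atTop (𝓝 (e h₀ x)) := by
  obtain ⟨u, huA, hu⟩ := exists_seq_forall_exists_seq_tendsto_of_mem_closure he_left he_right hA
  refine ⟨u, huA, fun x => ?_⟩
  obtain ⟨d, hud, hd, hdx⟩ := hu x
  exact tendsto_of_tendsto_iterated_of_separatelyContinuous he_left he_right hK
    (fun n => hAK (huA n)) hud hd hdx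

theorem exists_eqOn_forall_lt_norm_apply {𝕜 F : Type*} [RCLike 𝕜] [SeminormedAddCommGroup F]
    [NormedSpace 𝕜 F] (p : Submodule 𝕜 F) (Φ : StrongDual 𝕜 F) :
    ∃ Ψ : StrongDual 𝕜 F, EqOn Ψ Φ p ∧ ∀ δ < ‖Ψ‖, ∃ y ∈ p, ‖y‖ ≤ 1 ∧ δ < ‖Φ y‖ := by
  obtain ⟨Ψ, hΨ_ext, hΨ_norm⟩ := exists_extension_norm_eq p (Φ.comp p.subtypeL)
  refine ⟨Ψ, fun y hy => hΨ_ext ⟨y, hy⟩, fun δ hδ => ?_⟩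
  by_contra! hle
  have hδ_nonneg : 0 ≤ δ := (norm_nonneg _).trans (hle 0 p.zero_mem (by simp))
  refine hδ.not_ge (hΨ_norm.trans_le ?_)
  exact ContinuousLinearMap.opNorm_le_of_unit_norm hδ_nonneg fun y hy => hle y y.2 hy.le

section Bidual

variable {𝕜 E : Type*} [RCLike 𝕜] [SeminormedAddCommGroup E] [NormedSpace 𝕜 E]

theorem exists_inclusionInDoubleDual_eq_of_forall_apply_eq_zero
    {Φ : StrongDual 𝕜 (StrongDual 𝕜 E)} {s : Finset E}
    (hΦ : ∀ f : StrongDual 𝕜 E, (∀ x ∈ s, f x = 0) → Φ f = 0) :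
    ∃ x, inclusionInDoubleDual 𝕜 E x = Φ := by
  let eval (x : s) : StrongDual 𝕜 E →ₗ[𝕜] 𝕜 := (inclusionInDoubleDual 𝕜 E x).toLinearMap
  have hspan : Φ.toLinearMap ∈ Submodule.span 𝕜 (range eval) :=
    mem_span_of_iInf_ker_le_ker fun f hf =>
      hΦ f fun x hx => (Submodule.mem_iInf _).1 hf ⟨x, hx⟩
  obtain ⟨c, hc⟩ := (Submodule.mem_span_range_iff_exists_fun 𝕜).1 hspan
  refine ⟨∑ x, c x • (x : E), ContinuousLinearMap.coe_injective ?_⟩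
  rw [← hc]
  ext f
  simp [eval]

theorem exists_norm_le_one_forall_apply_eq_zero_lt_norm_apply
    {Φ : StrongDual 𝕜 (StrongDual 𝕜 E)} {δ : ℝ}
    (hΦ : ∀ x, δ < ‖Φ - inclusionInDoubleDual 𝕜 E x‖) (s : Finset E) :
    ∃ f : StrongDual 𝕜 E, ‖f‖ ≤ 1 ∧ (∀ x ∈ s, f x = 0) ∧ δ < ‖Φ f‖ := by
  let p : Submodule 𝕜 (StrongDual 𝕜 E) :=
    ⨅ x ∈ s, LinearMap.ker (inclusionInDoubleDual 𝕜 E x).toLinearMap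
  have mem_p (f : StrongDual 𝕜 E) : f ∈ p ↔ ∀ x ∈ s, f x = 0 := by simp [p]
  obtain ⟨Ψ, hΨ_eq, hΨ_norm⟩ := exists_eqOn_forall_lt_norm_apply p Φ
  obtain ⟨x, hx⟩ := exists_inclusionInDoubleDual_eq_of_forall_apply_eq_zero (Φ := Φ - Ψ) (s := s)
    fun f hf => sub_eq_zero.2 (hΨ_eq ((mem_p f).2 hf)).symm
  have hδ : δ < ‖Ψ‖ := by
    simpa only [hx, sub_sub_cancel Φ Ψ] using hΦ x
  obtain ⟨f, hfp, hf_norm, hf⟩ := hΨ_norm δ hδ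
  exact ⟨f, hf_norm, (mem_p f).1 hfp, hf⟩

theorem zero_mem_closure_setOf_lt_norm_apply
    {Φ : StrongDual 𝕜 (StrongDual 𝕜 E)} {δ : ℝ}
    (hΦ : ∀ x, δ < ‖Φ - inclusionInDoubleDual 𝕜 E x‖) :
    (0 : WeakDual 𝕜 E) ∈
      closure {f | ‖WeakDual.toStrongDual f‖ ≤ 1 ∧ δ < ‖Φ (WeakDual.toStrongDual f)‖} := by
  choose f hf_norm hf_zero hf using exists_norm_le_one_forall_apply_eq_zero_lt_norm_apply hΦ
  refine mem_closure_of_tendsto (f := fun s => StrongDual.toWeakDual (f s)) (b := atTop) ?_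
    (.of_forall fun s => ⟨hf_norm s, hf s⟩)
  refine tendsto_iff_forall_eval_tendsto_topDualPairing.2 fun x => ?_
  refine tendsto_const_nhds.congr' ?_
  filter_upwards [eventually_ge_atTop {x}] with s hs
  exact (hf_zero s x (Finset.singleton_subset_iff.1 hs)).symm

theorem exists_pos_forall_lt_norm_sub_inclusionInDoubleDual [CompleteSpace E]
    {Φ : StrongDual 𝕜 (StrongDual 𝕜 E)} (hΦ : ∀ x, inclusionInDoubleDual 𝕜 E x ≠ Φ) :
    ∃ δ > 0, ∀ x, δ < ‖Φ - inclusionInDoubleDual 𝕜 E x‖ := by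
  have hclosed : IsClosed (range (inclusionInDoubleDual 𝕜 E)) :=
    (inclusionInDoubleDualLi (E := E) 𝕜).isometry.isUniformInducing.isComplete_range.isClosed
  obtain ⟨ε, hε, hball⟩ := Metric.isOpen_iff.1 hclosed.isOpen_compl Φ (by simpa using hΦ)
  refine ⟨ε / 2, half_pos hε, fun x => (half_lt_self hε).trans_le ?_⟩
  by_contra! hlt
  exact hball ((mem_ball_iff_norm' (E := StrongDual 𝕜 (StrongDual 𝕜 E))).2 hlt) (mem_range_self x)

end Bidual

/-- The element `x` is the weak (Pettis) integral of `φ` against `μ`, which is the barycenter of the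
image of `μ` under `φ` when `μ` is a probability measure. Meaningful when every `f ∘ φ` is
integrable: the Bochner integral on the right is `0` otherwise. -/
def IsWeakIntegral (𝕜 : Type*) {E X : Type*} [RCLike 𝕜] [SeminormedAddCommGroup E]
    [NormedSpace 𝕜 E] [MeasurableSpace X] (φ : X → E) (μ : Measure X) (x : E) : Prop :=
  ∀ f : StrongDual 𝕜 E, f x = ∫ t, f (φ t) ∂μ

section WeakIntegral

variable {𝕜 E X : Type*} [RCLike 𝕜] [SeminormedAddCommGroup E] [NormedSpace 𝕜 E]
  [TopologicalSpace X] [CompactSpace X]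

theorem exists_forall_norm_le_of_forall_continuous {φ : X → E}
    (hφ : ∀ f : StrongDual 𝕜 E, Continuous fun t => f (φ t)) : ∃ M, ∀ t, ‖φ t‖ ≤ M := by
  obtain ⟨M, hM⟩ := banach_steinhaus (g := fun t => inclusionInDoubleDual 𝕜 E (φ t)) fun f => by
    obtain ⟨c, hc⟩ := (isCompact_range (hφ f)).isBounded.exists_norm_le
    exact ⟨c, fun t => hc _ (mem_range_self t)⟩
  exact ⟨M, fun t => ((inclusionInDoubleDualLi 𝕜).norm_map (φ t)).ge.trans (hM t)⟩

variable [MeasurableSpace X] [OpensMeasurableSpace X]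

theorem integrable_of_forall_continuous {φ : X → E}
    (hφ : ∀ f : StrongDual 𝕜 E, Continuous fun t => f (φ t)) (μ : Measure X) [IsFiniteMeasure μ]
    (f : StrongDual 𝕜 E) : Integrable (fun t => f (φ t)) μ :=
  (hφ f).integrable_of_hasCompactSupport (.of_compactSpace _)

theorem exists_strongDual_apply_eq_integral {φ : X → E}
    (hφ : ∀ f : StrongDual 𝕜 E, Continuous fun t => f (φ t)) (μ : Measure X) [IsFiniteMeasure μ] :
    ∃ Φ : StrongDual 𝕜 (StrongDual 𝕜 E), ∀ f, Φ f = ∫ t, f (φ t) ∂μ := by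
  obtain ⟨M, hM⟩ := exists_forall_norm_le_of_forall_continuous hφ
  have hint := integrable_of_forall_continuous hφ μ
  let Φ : StrongDual 𝕜 E →ₗ[𝕜] 𝕜 :=
    { toFun := fun f => ∫ t, f (φ t) ∂μ
      map_add' := fun f g => integral_add (hint f) (hint g)
      map_smul' := fun c f => integral_smul c fun t => f (φ t) }
  refine ⟨Φ.mkContinuous (M * μ.real univ) fun f => ?_, fun f => rfl⟩
  calc ‖∫ t, f (φ t) ∂μ‖ ≤ ‖f‖ * M * μ.real univ :=
        norm_integral_le_of_norm_le_const (.of_forall fun t => f.le_opNorm_of_le (hM t))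
    _ = M * μ.real univ * ‖f‖ := by ring

theorem exists_isWeakIntegral [CompleteSpace E] {φ : X → E}
    (hφ : ∀ f : StrongDual 𝕜 E, Continuous fun t => f (φ t)) (μ : Measure X) [IsFiniteMeasure μ] :
    ∃ x, IsWeakIntegral 𝕜 φ μ x := by
  obtain ⟨Φ, hΦ⟩ := exists_strongDual_apply_eq_integral hφ μ
  suffices ∃ x, inclusionInDoubleDual 𝕜 E x = Φ by
    obtain ⟨x, rfl⟩ := this
    exact ⟨x, hΦ⟩
  by_contra! hrange
  obtain ⟨δ, hδ, hdist⟩ := exists_pos_forall_lt_norm_sub_inclusionInDoubleDual hrange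
  obtain ⟨u, hu, hu_lim⟩ := exists_seq_tendsto_of_mem_closure_of_separatelyContinuous
    (e := fun (f : WeakDual 𝕜 E) t => f (φ t)) (fun t => WeakDual.eval_continuous (φ t)) hφ
    (WeakDual.isCompact_closedBall 0 1) (fun f hf => mem_closedBall_zero_iff.2 hf.1)
    (zero_mem_closure_setOf_lt_norm_apply hdist)
  obtain ⟨M, hM⟩ := exists_forall_norm_le_of_forall_continuous hφ
  have hlim : Tendsto (fun n => ‖∫ t, u n (φ t) ∂μ‖) atTop (𝓝 ‖∫ _, (0 : 𝕜) ∂μ‖) := by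
    refine (tendsto_integral_of_dominated_convergence (fun _ => 1 * M)
      (fun n => (hφ (u n)).aestronglyMeasurable_of_compactSpace) (integrable_const _)
      (fun n => .of_forall fun t => ?_) (.of_forall hu_lim)).norm
    exact ContinuousLinearMap.le_of_opNorm_le_of_le _ (hu n).1 (hM t)
  rw [integral_zero, norm_zero] at hlim
  exact hδ.not_ge (ge_of_tendsto' hlim fun n => (hΦ (u n) ▸ (hu n).2).le)

end WeakIntegral

section Barycenter

variable {E X : Type*} [NormedAddCommGroup E] [NormedSpace ℝ E] [TopologicalSpace X]
  [CompactSpace X] [MeasurableSpace X] {φ : X → E}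

theorem convex_setOf_exists_isWeakIntegral [OpensMeasurableSpace X]
    (hφ : ∀ f : StrongDual ℝ E, Continuous fun t => f (φ t)) :
    Convex ℝ {x | ∃ μ : ProbabilityMeasure X, IsWeakIntegral ℝ φ μ x} := by
  rintro x ⟨μ, hμ⟩ y ⟨ν, hν⟩ a b ha hb hab
  obtain rfl : b = 1 - a := by linarith
  let p : I := ⟨a, ha, by linarith⟩
  refine ⟨⟨toNNReal p • (μ : Measure X) + toNNReal (σ p) • (ν : Measure X), inferInstance⟩,
    fun f => ?_⟩
  have hint (ρ : Measure X) [IsFiniteMeasure ρ] := integrable_of_forall_continuous hφ ρ f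
  rw [ProbabilityMeasure.coe_mk, integral_add_measure (hint _) (hint _),
    integral_smul_nnreal_measure, integral_smul_nnreal_measure, ← hμ, ← hν]
  simp [p, NNReal.smul_def]

theorem isWeaklyCompact_setOf_exists_isWeakIntegral [CompleteSpace E] [T2Space X] [BorelSpace X]
    (hφ : ∀ f : StrongDual ℝ E, Continuous fun t => f (φ t)) :
    IsWeaklyCompact {x | ∃ μ : ProbabilityMeasure X, IsWeakIntegral ℝ φ μ x} := by
  choose bar hbar using fun μ : ProbabilityMeasure X => exists_isWeakIntegral hφ (μ : Measure X)
  have hbar_eq : {x | ∃ μ : ProbabilityMeasure X, IsWeakIntegral ℝ φ μ x} = range bar := by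
    ext x
    refine exists_congr fun μ => ⟨fun hx => ?_, fun hx => hx ▸ hbar μ⟩
    exact (SeparatingDual.eq_iff_forall_dual_eq (R := ℝ)).2 fun f => (hbar μ f).trans (hx f).symm
  have hbar_cont : Continuous fun μ => toWeakSpace ℝ E (bar μ) := by
    refine WeakBilin.continuous_of_continuous_eval _ fun f => ?_
    change Continuous fun μ => f (bar μ)
    simp only [hbar _ f]
    exact ProbabilityMeasure.continuous_integral_continuousMap (⟨_, hφ f⟩ : C(X, ℝ))
  rw [IsWeaklyCompact, hbar_eq, ← range_comp]
  exact isCompact_range hbar_cont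

end Barycenter

section KreinSmulian

variable {E : Type*} [NormedAddCommGroup E] [NormedSpace ℝ E] {C : Set E}

theorem IsWeaklyCompact.of_isClosed_convex_subset {K : Set E} (hK : IsWeaklyCompact K)
    (hC_closed : IsClosed C) (hC_convex : Convex ℝ C) (hCK : C ⊆ K) : IsWeaklyCompact C := by
  refine IsCompact.of_isClosed_subset hK ?_ (image_mono hCK)
  rw [← hC_closed.closure_eq, hC_convex.toWeakSpace_closure ℝ]
  exact isClosed_closure

theorem IsWeaklyCompact.isClosed (hC : IsWeaklyCompact C) : IsClosed C := by
  rw [← preimage_image_eq C (toWeakSpace ℝ E).injective]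
  exact (IsCompact.isClosed hC).preimage (toWeakSpaceCLM ℝ E).continuous

theorem continuous_apply_toWeakSpace_symm (f : StrongDual ℝ E) :
    Continuous fun x : WeakSpace ℝ E => f ((toWeakSpace ℝ E).symm x) :=
  WeakBilin.eval_continuous _ f

theorem IsWeaklyCompact.closedConvexHull [CompleteSpace E] (hC : IsWeaklyCompact C) :
    IsWeaklyCompact (closedConvexHull ℝ C) := by
  let K : Set (WeakSpace ℝ E) := toWeakSpace ℝ E '' C
  let φ : K → E := fun z => (toWeakSpace ℝ E).symm z
  have hφ (f : StrongDual ℝ E) : Continuous fun z => f (φ z) :=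
    (continuous_apply_toWeakSpace_symm f).comp continuous_subtype_val
  have : CompactSpace K := isCompact_iff_compactSpace.1 hC
  borelize ↥K
  have hbar := isWeaklyCompact_setOf_exists_isWeakIntegral hφ
  have hC_sub : C ⊆ {x | ∃ μ : ProbabilityMeasure K, IsWeakIntegral ℝ φ μ x} := fun x hx =>
    ⟨diracProba ⟨toWeakSpace ℝ E x, mem_image_of_mem _ hx⟩, fun f => by
      simp [diracProba, φ]⟩
  exact hbar.of_isClosed_convex_subset isClosed_closedConvexHull convex_closedConvexHull
    (closedConvexHull_min hC_sub (convex_setOf_exists_isWeakIntegral hφ) hbar.isClosed)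

theorem convexHull_subset_closedConvexHull_add_smul_closedBall {A : Set E} {t : ℝ}
    (hA : A ⊆ C + t • closedBall (0 : E) 1) :
    convexHull ℝ A ⊆ closedConvexHull ℝ C + t • closedBall (0 : E) 1 :=
  convexHull_min (hA.trans (add_subset_add_right subset_closedConvexHull))
    (convex_closedConvexHull.add ((convex_closedBall 0 1).smul t))

end KreinSmulian

theorem deBlasi_convexHull {E : Type*} [NormedAddCommGroup E] [NormedSpace ℝ E]
    [CompleteSpace E] (A : Set E) (hA : A.Nonempty) (hAb : Bornology.IsBounded A) :
    deBlasi (convexHull ℝ A) = deBlasi A := by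
  refine congrArg sInf (Set.ext fun t => and_congr_right fun _ => ⟨?_, ?_⟩)
  · rintro ⟨C, hC, hsub⟩
    exact ⟨C, hC, (subset_convexHull ℝ A).trans hsub⟩
  · rintro ⟨C, hC, hsub⟩
    exact ⟨closedConvexHull ℝ C, hC.closedConvexHull,
      convexHull_subset_closedConvexHull_add_smul_closedBall hsub⟩
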